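/- arXiv:2104.11910 — 2 statements merged into one kernel-verified Lean document; each statement's English description precedes it below -/
import Mathlib

section
/- For any finite simple graph G on n vertices, its complement graph Ḡ, and any k ≥ 1: k²·n ≤ χ_k(G)·χ_k(Ḡ) ≤ k²·((n+1)/2)², and 2k·√n ≤ χ_k(G) + χ_k(Ḡ) ≤ k·(n+1). -/
open Finset

/-- The `k`-th (multi)chromatic number `χ_k(G)`: the least number of colors `R`
such that each vertex can be assigned a `k`-element set of colors with
adjacent vertices receiving disjoint sets. -/
noncomputable def multiChrom {V : Type*} (k : ℕ) (G : SimpleGraph V) : ℕ :=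
  sInf {R : ℕ | ∃ f : V → Finset (Fin R),
    (∀ v, (f v).card = k) ∧ ∀ u v, G.Adj u v → Disjoint (f u) (f v)}


def PCol {V : Type*} (H : SimpleGraph V) (s : Finset V) (a : ℕ) : Prop :=
  ∃ c : V → ℕ, (∀ v ∈ s, c v < a) ∧ ∀ u ∈ s, ∀ v ∈ s, H.Adj u v → c u ≠ c v

lemma PCol.extend {V : Type*} [DecidableEq V] {H : SimpleGraph V} {s : Finset V}
    {c : V → ℕ} {a b : ℕ} {x : V} (hx : x ∉ s) (hc : ∀ v ∈ s, c v < a)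
    (hp : ∀ u ∈ s, ∀ v ∈ s, H.Adj u v → c u ≠ c v) (hab : a ≤ b) (i : ℕ) (hi : i < b)
    (hne : ∀ v ∈ s, H.Adj x v → c v ≠ i) : PCol H (insert x s) b := by
  refine ⟨fun v => if v = x then i else c v, ?_, ?_⟩
  · intro v hv
    by_cases h : v = x
    · simpa [h] using hi
    · have := hc v ((Finset.mem_insert.1 hv).resolve_left h)
      simp only [h, if_false]; omega
  · intro u hu v hv huv
    by_cases h : u = x <;> by_cases h' : v = x
    · subst h; subst h'; exact absurd huv (H.loopless.irrefl _)
    · have hv' := (Finset.mem_insert.1 hv).resolve_left h'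
      subst h
      simpa [h'] using (hne v hv' huv).symm
    · have hu' := (Finset.mem_insert.1 hu).resolve_left h
      subst h'
      simpa [h] using hne u hu' huv.symm
    · simpa [h, h'] using hp u ((Finset.mem_insert.1 hu).resolve_left h) v
        ((Finset.mem_insert.1 hv).resolve_left h') huv

lemma PCol.succ {V : Type*} [DecidableEq V] {H : SimpleGraph V} {s : Finset V}
    {a : ℕ} {x : V} (hx : x ∉ s) (h : PCol H s a) : PCol H (insert x s) (a + 1) := by
  obtain ⟨c, hc, hp⟩ := h
  exact PCol.extend hx hc hp (Nat.le_succ a) a (Nat.lt_succ_self a)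
    fun v hv _ => (hc v hv).ne

open Classical in
lemma PCol.same {V : Type*} {H : SimpleGraph V} {s : Finset V}
    {a : ℕ} {x : V} (hx : x ∉ s) (h : PCol H s a)
    (hd : (s.filter fun v => H.Adj x v).card < a) : PCol H (insert x s) a := by
  obtain ⟨c, hc, hp⟩ := h
  have h1 : ((s.filter fun v => H.Adj x v).image c).card < (range a).card := by
    rw [card_range]; exact lt_of_le_of_lt card_image_le hd
  obtain ⟨i, hi, hn⟩ := Finset.exists_mem_notMem_of_card_lt_card h1
  refine PCol.extend hx hc hp le_rfl i (by simpa using hi) ?_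
  intro v hv hxv h
  exact hn (mem_image.2 ⟨v, mem_filter.2 ⟨hv, hxv⟩, h⟩)

lemma nordhaus {V : Type*} (G : SimpleGraph V) (s : Finset V) :
    ∃ a b, a + b ≤ s.card + 1 ∧ PCol G s a ∧ PCol Gᶜ s b := by
  classical
  induction s using Finset.induction_on with
  | empty => exact ⟨0, 0, by simp, ⟨fun _ => 0, by simp, by simp⟩, ⟨fun _ => 0, by simp, by simp⟩⟩
  | insert x s hx ih =>
    obtain ⟨a, b, hab, ha, hb⟩ := ih
    rw [card_insert_of_notMem hx]
    by_cases h1 : (s.filter fun v => G.Adj x v).card < a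
    · exact ⟨a, b + 1, by omega, ha.same hx h1, hb.succ hx⟩
    by_cases h2 : (s.filter fun v => Gᶜ.Adj x v).card < b
    · exact ⟨a + 1, b, by omega, ha.succ hx, hb.same hx (by convert h2)⟩
    refine ⟨a + 1, b + 1, ?_, ha.succ hx, hb.succ hx⟩
    have h3 : (s.filter fun v => Gᶜ.Adj x v) = s.filter fun v => ¬ G.Adj x v := by
      apply filter_congr
      intro v hv
      have : x ≠ v := fun h => hx (h ▸ hv)
      simp [SimpleGraph.compl_adj, this]
    rw [h3] at h2
    have := Finset.card_filter_add_card_filter_not (s := s) (fun v => G.Adj x v)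
    omega

lemma PCol.multi {V : Type*} [Fintype V] {H : SimpleGraph V} {a : ℕ} (k : ℕ)
    (h : PCol H univ a) : a * k ∈ {R : ℕ | ∃ f : V → Finset (Fin R),
    (∀ v, (f v).card = k) ∧ ∀ u v, H.Adj u v → Disjoint (f u) (f v)} := by
  obtain ⟨c, hc, hp⟩ := h
  refine ⟨fun v => (univ : Finset (Fin k)).image
    fun i => finProdFinEquiv (⟨c v, hc v (mem_univ v)⟩, i), ?_, ?_⟩
  · intro v
    rw [card_image_of_injective]
    · simp
    · intro i j hij
      simpa using hij
  · intro u v huv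
    rw [Finset.disjoint_left]
    intro x h1 h2
    obtain ⟨i, -, rfl⟩ := mem_image.1 h1
    obtain ⟨j, -, hj⟩ := mem_image.1 h2
    have := congrArg (fun p => (p.1 : ℕ)) (finProdFinEquiv.injective hj)
    exact hp u (mem_univ _) v (mem_univ _) huv this.symm

lemma lower {V : Type*} [Fintype V] {G : SimpleGraph V} {k R S : ℕ}
    {f : V → Finset (Fin R)} {g : V → Finset (Fin S)}
    (hf : ∀ v, (f v).card = k) (hg : ∀ v, (g v).card = k)
    (hf' : ∀ u v, G.Adj u v → Disjoint (f u) (f v))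
    (hg' : ∀ u v, Gᶜ.Adj u v → Disjoint (g u) (g v)) :
    Fintype.card V * (k * k) ≤ R * S := by
  classical
  have h := Finset.card_biUnion (s := (univ : Finset V)) (t := fun v => f v ×ˢ g v) (by
    intro u _ v _ huv
    change Disjoint (f u ×ˢ g u) (f v ×ˢ g v)
    rw [Finset.disjoint_product]
    by_cases hA : G.Adj u v
    · exact Or.inl (hf' u v hA)
    · exact Or.inr (hg' u v ((SimpleGraph.compl_adj _ _ _).2 ⟨huv, hA⟩)))
  simp only [card_product, hf, hg, sum_const, card_univ, smul_eq_mul] at h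
  rw [← h]
  refine (card_le_univ _).trans ?_
  simp

theorem stmt_15 {V : Type*} [Fintype V] (G : SimpleGraph V) (n : ℕ)
    (hn : Fintype.card V = n) (k : ℕ) (hk : 1 ≤ k) :
    ((k : ℝ) ^ 2 * (n : ℝ) ≤ (multiChrom k G : ℝ) * (multiChrom k Gᶜ : ℝ) ∧
      (multiChrom k G : ℝ) * (multiChrom k Gᶜ : ℝ) ≤
        (k : ℝ) ^ 2 * (((n : ℝ) + 1) / 2) ^ 2) ∧
    (2 * (k : ℝ) * Real.sqrt (n : ℝ) ≤
        (multiChrom k G : ℝ) + (multiChrom k Gᶜ : ℝ) ∧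
      (multiChrom k G : ℝ) + (multiChrom k Gᶜ : ℝ) ≤ (k : ℝ) * ((n : ℝ) + 1)) := by
  obtain ⟨a, b, hab, ha, hb⟩ := nordhaus G univ
  rw [card_univ, hn] at hab
  have hA := ha.multi k
  have hB := hb.multi k
  have hR : multiChrom k G ≤ a * k := Nat.sInf_le hA
  have hS : multiChrom k Gᶜ ≤ b * k := Nat.sInf_le hB
  obtain ⟨f, hf, hf'⟩ := Nat.sInf_mem ⟨_, hA⟩
  obtain ⟨g, hg, hg'⟩ := Nat.sInf_mem ⟨_, hB⟩
  have hL : n * (k * k) ≤ multiChrom k G * multiChrom k Gᶜ := hn ▸ lower hf hg hf' hg'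
  have hU : multiChrom k G + multiChrom k Gᶜ ≤ k * (n + 1) := by nlinarith
  generalize multiChrom k G = R at *
  generalize multiChrom k Gᶜ = S at *
  have hL' : (n : ℝ) * (k * k) ≤ R * S := by exact_mod_cast hL
  have hU' : (R : ℝ) + S ≤ k * (n + 1) := by exact_mod_cast hU
  have hR0 : (0 : ℝ) ≤ R := Nat.cast_nonneg R
  have hS0 : (0 : ℝ) ≤ S := Nat.cast_nonneg S
  refine ⟨⟨by linarith, ?_⟩, ?_, hU'⟩
  · have h2 : ((R : ℝ) + S) ^ 2 ≤ (k * (n + 1)) ^ 2 := by gcongr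
    nlinarith [sq_nonneg ((R : ℝ) - S)]
  · refine (sq_le_sq₀ (by positivity) (by positivity)).1 ?_
    have := Real.sq_sqrt (Nat.cast_nonneg (α := ℝ) n)
    rw [mul_pow, this]
    nlinarith [sq_nonneg ((R : ℝ) - S)]
end

section
/- Let G be a finite simple loopless graph with at least one edge, let L_G be its Laplacian matrix with largest eigenvalue λ_1(L_G), and let d̄ be the average degree of the vertices of G. Then for every k ≥ 1, χ_k(G) ≥ k·λ_1(L_G)/(λ_1(L_G) − d̄). -/
open Finset

lemma lap_bound {V : Type*} [Fintype V] [DecidableEq V] (A : Matrix V V ℝ)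
    (hL : A.IsHermitian) (lam1 : ℝ)
    (h : ∀ i, hL.eigenvalues i ≤ lam1) (x : V → ℝ) :
    x ⬝ᵥ (A.mulVec x) ≤ lam1 * (x ⬝ᵥ x) := by
  have hs := hL.spectral_theorem
  have hps : (lam1 • (1 : Matrix V V ℝ) - A).PosSemidef := by
    have hd : (Matrix.diagonal (fun i => lam1 - hL.eigenvalues i)).PosSemidef :=
      Matrix.PosSemidef.diagonal (fun i => sub_nonneg.2 (h i))
    have := hd.mul_mul_conjTranspose_same (hL.eigenvectorUnitary : Matrix V V ℝ)
    convert this using 1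
    have e : Matrix.diagonal (fun i => lam1 - hL.eigenvalues i)
        = lam1 • (1 : Matrix V V ℝ) - Matrix.diagonal hL.eigenvalues := by
      rw [Matrix.smul_one_eq_diagonal, Matrix.diagonal_sub]
    have hu : (hL.eigenvectorUnitary : Matrix V V ℝ) *
        (hL.eigenvectorUnitary : Matrix V V ℝ).conjTranspose = 1 :=
      Unitary.coe_mul_star_self hL.eigenvectorUnitary
    rw [e, mul_sub, sub_mul, mul_smul_comm, smul_mul_assoc, mul_one, hu]
    congr 1
  have h2 := hps.dotProduct_mulVec_nonneg x
  simp only [Matrix.sub_mulVec, Matrix.smul_mulVec, Matrix.one_mulVec, star_trivial,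
    dotProduct_sub, dotProduct_smul, smul_eq_mul] at h2
  linarith

lemma multi_key {V : Type*} [Fintype V] [DecidableEq V] (G : SimpleGraph V)
    [DecidableRel G.Adj] (lam1 : ℝ) [Nonempty V]
    (h : ∀ x : V → ℝ, x ⬝ᵥ ((G.lapMatrix ℝ).mulVec x) ≤ lam1 * (x ⬝ᵥ x))
    (k R : ℕ) (f : V → Finset (Fin R)) (hf : ∀ v, (f v).card = k)
    (hd : ∀ u v, G.Adj u v → Disjoint (f u) (f v)) :
    ∃ M : ℝ, (k : ℝ) ^ 2 ≤ R * M ∧ (k : ℝ) * (∑ v : V, (G.degree v : ℝ)) ≤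
      lam1 * (Fintype.card V * (k - M)) := by
  set n : ℝ := (Fintype.card V : ℝ) with hn
  have hn0 : n ≠ 0 := by simp [hn]
  let x : Fin R → V → ℝ := fun c v => if c ∈ f v then 1 else 0
  let m : Fin R → ℝ := fun c => (∑ v, x c v) / n
  have hx1 : ∀ v, ∑ c, x c v = k := by
    intro v; simp [x, hf]
  have hm : ∑ c, m c = k := by
    simp only [m]
    rw [← Finset.sum_div, Finset.sum_comm]
    simp only [hx1]
    simp [← hn]
    field_simp
  refine ⟨∑ c, m c ^ 2, ?_, ?_⟩
  · have := sq_sum_le_card_mul_sum_sq (s := (Finset.univ : Finset (Fin R))) (f := m)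
    simpa [hm] using this
  have h1 : ∀ c, (∑ i, ∑ j, if G.Adj i j then (x c i - x c j) ^ 2 else 0) / 2
      ≤ lam1 * (∑ v, x c v - n * m c ^ 2) := by
    intro c
    have := h (fun v => x c v - m c)
    rw [← Matrix.toLinearMap₂'_apply', SimpleGraph.lapMatrix_toLinearMap₂'] at this
    have e : (fun v => x c v - m c) ⬝ᵥ (fun v => x c v - m c)
        = ∑ v, x c v - n * m c ^ 2 := by
      have hsx : ∑ v, x c v = n * m c := by simp only [m]; field_simp
      have : ∀ v, (x c v - m c) * (x c v - m c) = x c v - 2 * m c * x c v + m c ^ 2 := by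
        intro v
        have : x c v * x c v = x c v := by simp [x]
        linear_combination this
      simp only [dotProduct, this, Finset.sum_add_distrib, Finset.sum_sub_distrib,
        ← Finset.mul_sum, hsx]
      simp [← hn]
      ring
    rw [e] at this
    simpa using this
  have h2 := Finset.sum_le_sum (fun c (_ : c ∈ (Finset.univ : Finset (Fin R))) => h1 c)
  have e2 : ∑ c, lam1 * (∑ v, x c v - n * m c ^ 2) = lam1 * (n * (k - ∑ c, m c ^ 2)) := by
    rw [← Finset.mul_sum, Finset.sum_sub_distrib, Finset.sum_comm, ← Finset.mul_sum]
    simp only [hx1]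
    simp [← hn]
    left; ring
  have e1 : ∑ c, (∑ i, ∑ j, if G.Adj i j then (x c i - x c j) ^ 2 else 0) / 2
      = k * ∑ v, (G.degree v : ℝ) := by
    rw [← Finset.sum_div, Finset.sum_comm, Finset.mul_sum, Finset.sum_div]
    refine Finset.sum_congr rfl fun i _ => ?_
    rw [Finset.sum_comm]
    have : ∀ j, ∑ c, (if G.Adj i j then (x c i - x c j) ^ 2 else 0)
        = if G.Adj i j then (2 * k : ℝ) else 0 := by
      intro j
      split_ifs with ha
      · have : ∀ c, (x c i - x c j) ^ 2 = x c i + x c j := by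
          intro c
          have : c ∈ f i → c ∉ f j := fun h => Finset.disjoint_left.1 (hd i j ha) h
          simp only [x]
          split_ifs <;> simp_all
        simp only [this, Finset.sum_add_distrib, hx1]
        ring
      · simp
    simp only [this]
    rw [← Finset.sum_filter, Finset.sum_const, ← SimpleGraph.neighborFinset_eq_filter,
      SimpleGraph.card_neighborFinset_eq_degree, nsmul_eq_mul]
    ring
  rw [e1, e2] at h2
  exact h2

theorem stmt_16 {V : Type*} [Fintype V] [DecidableEq V] (G : SimpleGraph V)
    [DecidableRel G.Adj] (hedge : G.edgeSet.Nonempty)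
    (hL : (G.lapMatrix ℝ).IsHermitian) (lam1 : ℝ)
    (hlam1 : IsGreatest (Set.range hL.eigenvalues) lam1)
    (k : ℕ) (hk : 1 ≤ k) :
    (k : ℝ) * lam1 /
        (lam1 - (∑ v : V, (G.degree v : ℝ)) / (Fintype.card V : ℝ)) ≤
      (multiChrom k G : ℝ) := by
  have hne : {R : ℕ | ∃ f : V → Finset (Fin R),
      (∀ v, (f v).card = k) ∧ ∀ u v, G.Adj u v → Disjoint (f u) (f v)}.Nonempty := by
    let e := Fintype.equivFin (V × Fin k)
    refine ⟨Fintype.card (V × Fin k), fun v => Finset.univ.image (fun i => e (v, i)), ?_, ?_⟩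
    · intro v
      rw [Finset.card_image_of_injective]
      · simp
      · intro a b hab
        simpa using hab
    · intro u v huv
      rw [Finset.disjoint_left]
      intro a ha hb
      simp only [Finset.mem_image, Finset.mem_univ, true_and] at ha hb
      obtain ⟨i, rfl⟩ := ha
      obtain ⟨j, hj⟩ := hb
      have := e.injective hj
      simp only [Prod.mk.injEq] at this
      exact huv.ne this.1.symm
  obtain ⟨f, hf, hd⟩ := Nat.sInf_mem hne
  change (_ : ℝ) ≤ ((sInf {R : ℕ | ∃ f : V → Finset (Fin R),
      (∀ v, (f v).card = k) ∧ ∀ u v, G.Adj u v → Disjoint (f u) (f v)} : ℕ) : ℝ)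
  generalize sInf {R : ℕ | ∃ f : V → Finset (Fin R),
      (∀ v, (f v).card = k) ∧ ∀ u v, G.Adj u v → Disjoint (f u) (f v)} = R at f hf hd ⊢
  obtain ⟨ed, hed⟩ := hedge
  induction ed with | _ a b
  rw [SimpleGraph.mem_edgeSet] at hed
  haveI : Nonempty V := ⟨a⟩
  obtain ⟨M, hM1, hM2⟩ := multi_key G lam1
    (lap_bound _ hL lam1 (fun i => hlam1.2 ⟨i, rfl⟩)) k R f hf hd
  have hdeg : 0 < ∑ v : V, (G.degree v : ℝ) := by
    refine Finset.sum_pos' (fun _ _ => by positivity) ⟨a, Finset.mem_univ _, ?_⟩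
    exact_mod_cast (G.degree_pos_iff_exists_adj a).2 ⟨b, hed⟩
  have hn : (0 : ℝ) < Fintype.card V := by exact_mod_cast Fintype.card_pos
  have hk0 : (0 : ℝ) < k := by exact_mod_cast hk
  have hlam0 : 0 ≤ lam1 := by
    obtain ⟨i, hi⟩ := hlam1.1
    rw [← hi]
    exact (SimpleGraph.posSemidef_lapMatrix ℝ G).eigenvalues_nonneg i
  generalize (∑ v : V, (G.degree v : ℝ)) = D at *
  generalize (Fintype.card V : ℝ) = n at *
  have hD : D = n * (D / n) := by field_simp
  have hd0 : 0 < D / n := by positivity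
  generalize D / n = d at *
  subst hD
  have hR0 : (0 : ℝ) ≤ R := by positivity
  have hRpos : (0 : ℝ) < R := by
    rcases hR0.lt_or_eq with h | h
    · exact h
    · rw [← h] at hM1; nlinarith
  have hlpos : 0 < lam1 := by
    rcases hlam0.lt_or_eq with h | h
    · exact h
    · rw [← h] at hM2; nlinarith [mul_pos hk0 hdeg]
  have h3 : k * d ≤ lam1 * (k - M) := by
    refine le_of_mul_le_mul_left ?_ hn
    linarith
  have h4 : (k : ℝ) * (k * lam1) ≤ k * (R * (lam1 - d)) := by
    have := mul_le_mul_of_nonneg_left h3 hR0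
    have := mul_le_mul_of_nonneg_left hM1 hlam0
    nlinarith
  have h5 := le_of_mul_le_mul_left h4 hk0
  have h6 : 0 < lam1 - d := by
    have : 0 < R * (lam1 - d) := lt_of_lt_of_le (by positivity) h5
    exact (pos_iff_pos_of_mul_pos this).1 hRpos
  rw [div_le_iff₀ h6]
  exact h5
end
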